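/- For every n ≥ 1 and every ε ∈ Q_n there exist two trees min(ε), max(ε) ∈ Y_n such that the fiber of φ_n over ε is the weak order interval φ_n^{-1}(ε) = {t ∈ Y_n : min(ε) ≤ t ≤ max(ε)}. -/

import Mathlib

/-- Planar binary trees: `leaf` is the tree `|` (no interior vertex) and
`node l r = l ∨ r` is the grafting of `l` and `r` (their roots are joined to a new
vertex, which becomes the root). -/
inductive PBTree : Type
  | leaf : PBTree
  | node : PBTree → PBTree → PBTree
deriving DecidableEq

/-- The number of interior vertices of a planar binary tree: `t ∈ Yₙ` iff `t.size = n`. -/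
def PBTree.size : PBTree → ℕ
  | .leaf => 0
  | .node l r => l.size + r.size + 1

/-- The weak order on planar binary trees, generated transitively by
(a) `u ≤ u' → v ≤ v' → u∨v ≤ u'∨v'` and (b) `(u∨v)∨w ≤ u∨(v∨w)`. -/
inductive TreeLe : PBTree → PBTree → Prop
  | refl (t : PBTree) : TreeLe t t
  | graft {u u' v v' : PBTree} : TreeLe u u' → TreeLe v v' →
      TreeLe (.node u v) (.node u' v')
  | rotate (u v w : PBTree) : TreeLe (.node (.node u v) w) (.node u (.node v w))
  | trans {a b c : PBTree} : TreeLe a b → TreeLe b c → TreeLe a c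

/-- `phi t` is `φₙ(t) = (ε₁, …, ε_{n-1}) ∈ Qₙ = {±1}^{n-1}` for `t ∈ Yₙ`: the orientations
of the `n-1` interior leaves of `t` (all leaves except the two extreme ones), where
`εᵢ = -1` if the `i`-th interior leaf is right-oriented (SW–NE, a right child) and
`εᵢ = +1` if it is left-oriented (SE–NW, a left child).  Elements of `Qₙ` are modelled
as lists of integers of length `n-1` with entries `±1`. -/
def phi : PBTree → List ℤ
  | .leaf => []
  | .node .leaf .leaf => []
  | .node .leaf (.node c d) => 1 :: phi (.node c d)
  | .node (.node a b) .leaf => phi (.node a b) ++ [-1]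
  | .node (.node a b) (.node c d) => phi (.node a b) ++ ([-1, 1] ++ phi (.node c d))

namespace S17

open PBTree

def P : PBTree → List ℤ
  | .leaf => []
  | .node l .leaf => P l ++ [-1]
  | .node l (.node c d) => P l ++ 1 :: P (.node c d)

def Q : PBTree → List ℤ
  | .leaf => [-1]
  | .node c d => 1 :: P (.node c d)

theorem P_node (l r : PBTree) : P (.node l r) = P l ++ Q r := by
  cases r <;> simp [P, Q]

theorem P_phi (t : PBTree) (h : t ≠ .leaf) : P t = phi t ++ [-1] := by
  induction t with
  | leaf => exact absurd rfl h
  | node l r ihl ihr =>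
    rw [P_node]
    cases l <;> cases r <;> simp_all [phi, P, Q]

theorem P_length (t : PBTree) : (P t).length = t.size := by
  induction t with
  | leaf => rfl
  | node l r ihl ihr =>
    rw [P_node]
    cases r <;> simp_all [Q, PBTree.size] <;> omega

theorem le_refl_list (l : List ℤ) : List.Forall₂ (· ≤ ·) l l := by
  induction l <;> simp_all

theorem le_trans_list {a b c : List ℤ} (h : List.Forall₂ (· ≤ ·) a b)
    (h2 : List.Forall₂ (· ≤ ·) b c) : List.Forall₂ (· ≤ ·) a c := by
  induction h generalizing c with
  | nil => exact h2
  | cons h _ ih =>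
    cases h2 with
    | cons h3 h4 => exact .cons (le_trans h h3) (ih h4)

theorem le_antisymm_list {a b : List ℤ} (h : List.Forall₂ (· ≤ ·) a b)
    (h2 : List.Forall₂ (· ≤ ·) b a) : a = b := by
  induction h with
  | nil => rfl
  | cons h _ ih =>
    cases h2 with
    | cons h3 h4 => rw [le_antisymm h h3, ih h4]

theorem app_le {a b c d : List ℤ} (h : List.Forall₂ (· ≤ ·) a b)
    (h2 : List.Forall₂ (· ≤ ·) c d) : List.Forall₂ (· ≤ ·) (a ++ c) (b ++ d) := by
  induction h with
  | nil => exact h2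
  | cons h _ ih => exact .cons h ih

theorem mono {s t : PBTree} (h : TreeLe s t) :
    List.Forall₂ (· ≤ ·) (P s) (P t) ∧ List.Forall₂ (· ≤ ·) (Q s) (Q t) := by
  induction h with
  | refl t => exact ⟨le_refl_list _, le_refl_list _⟩
  | graft _ _ ih1 ih2 =>
    have := app_le ih1.1 ih2.2
    rw [← P_node, ← P_node] at this
    exact ⟨this, .cons le_rfl this⟩
  | rotate u v w =>
    have : List.Forall₂ (· ≤ ·) (P (.node (.node u v) w)) (P (.node u (.node v w))) := by
      rw [P_node, P_node, P_node, Q, P_node, List.append_assoc]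
      refine app_le (le_refl_list _) ?_
      rw [← List.cons_append]
      refine app_le ?_ (le_refl_list _)
      cases v with
      | leaf => simp [P, Q]
      | node a b => exact le_refl_list _
    exact ⟨this, .cons le_rfl this⟩
  | trans _ _ ih1 ih2 => exact ⟨le_trans_list ih1.1 ih2.1, le_trans_list ih1.2 ih2.2⟩

theorem size_eq {s t : PBTree} (h : TreeLe s t) : s.size = t.size := by
  rw [← P_length, ← P_length]; exact (mono h).1.length_eq

def addL : PBTree → PBTree
  | .leaf => .node .leaf .leaf
  | .node l r => .node (addL l) r

def addR : PBTree → PBTree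
  | .leaf => .leaf
  | .node .leaf r => .node .leaf (.node .leaf r)
  | .node (.node a b) r => .node (addR (.node a b)) r

def remL : PBTree → PBTree
  | .leaf => .leaf
  | .node .leaf r => r
  | .node (.node a b) r => .node (remL (.node a b)) r

theorem P_addL (t : PBTree) : P (addL t) = -1 :: P t := by
  induction t with
  | leaf => rfl
  | node l r ihl _ => rw [addL, P_node, P_node, ihl]; rfl

theorem P_addR (t : PBTree) (h : t ≠ .leaf) : P (addR t) = 1 :: P t := by
  induction t with
  | leaf => exact absurd rfl h
  | node l r ihl _ =>
    cases l with
    | leaf => rfl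
    | node a b => rw [addR, P_node, P_node _ r, ihl (by simp)]; rfl

theorem P_remL (t : PBTree) : P (remL t) = (P t).tail := by
  induction t with
  | leaf => rfl
  | node l r ihl _ =>
    cases l with
    | leaf => cases r <;> rfl
    | node a b =>
      have : P (.node a b) ≠ [] := by
        intro h
        have := P_length (.node a b)
        simp [h, PBTree.size] at this
      rw [remL, P_node, P_node _ r, ihl, List.tail_append_of_ne_nil this]

theorem addL_mono {s t : PBTree} (h : TreeLe s t) : TreeLe (addL s) (addL t) := by
  induction h with
  | refl t => exact .refl _
  | graft _ h2 ih1 ih2 => exact .graft ih1 h2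
  | rotate u v w => exact .rotate _ _ _
  | trans _ _ ih1 ih2 => exact .trans ih1 ih2

theorem addR_mono {s t : PBTree} (h : TreeLe s t) : TreeLe (addR s) (addR t) := by
  induction h with
  | refl t => exact .refl _
  | @graft u u' v v' h1 h2 ih1 ih2 =>
    have hs := size_eq h1
    cases u <;> cases u'
    · exact .graft (.refl _) (.graft (.refl _) h2)
    · simp [PBTree.size] at hs
    · simp [PBTree.size] at hs
    · exact .graft ih1 h2
  | rotate u v w =>
    cases u with
    | leaf => exact .trans (.rotate _ _ _) (.graft (.refl _) (.rotate _ _ _))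
    | node a b => exact .rotate _ _ _
  | trans _ _ ih1 ih2 => exact .trans ih1 ih2

theorem le_remL (t : PBTree) (h : t ≠ .leaf) : TreeLe t (.node .leaf (remL t)) := by
  induction t with
  | leaf => exact absurd rfl h
  | node l r ihl _ =>
    cases l with
    | leaf => exact .refl _
    | node a b => exact .trans (.graft (ihl (by simp)) (.refl _)) (.rotate _ _ _)

theorem addR_le (r : PBTree) (h : r ≠ .leaf) : TreeLe (addR r) (.node .leaf r) := by
  induction r with
  | leaf => exact absurd rfl h
  | node l r ihl _ =>
    cases l with
    | leaf => exact .refl _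
    | node a b => exact .trans (.graft (ihl (by simp)) (.refl _)) (.rotate _ _ _)

theorem head_node (a b r : PBTree) : (P (.node (.node a b) r)).head? = (P (.node a b)).head? := by
  have : P (.node a b) ≠ [] := by
    intro h
    have := P_length (.node a b)
    simp [h, PBTree.size] at this
  rw [P_node, List.head?_append_of_ne_nil _ this]

theorem addL_remL (t : PBTree) (h : (P t).head? = some (-1)) : addL (remL t) = t := by
  induction t with
  | leaf => simp [P] at h
  | node l r ihl _ =>
    cases l with
    | leaf =>
      cases r with
      | leaf => rfl
      | node a b => simp [P] at h
    | node a b =>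
      rw [head_node] at h
      rw [remL, addL, ihl h]

theorem addR_remL (t : PBTree) (h : (P t).head? = some 1) : 
    remL t ≠ .leaf ∧ TreeLe (addR (remL t)) t := by
  induction t with
  | leaf => simp [P] at h
  | node l r ihl _ =>
    cases l with
    | leaf =>
      cases r with
      | leaf => simp [P] at h
      | node a b => exact ⟨by rw [remL]; exact PBTree.noConfusion, addR_le _ (by rw [remL]; exact PBTree.noConfusion)⟩
    | node a b =>
      rw [head_node] at h
      obtain ⟨h1, h2⟩ := ihl h
      refine ⟨by simp [remL], ?_⟩
      rw [remL]
      generalize remL (.node a b) = x at *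
      cases x with
      | leaf => exact absurd rfl h1
      | node c d => exact .graft h2 (.refl _)

def mx : List ℤ → PBTree
  | [] => .node .leaf .leaf
  | x :: e => if x = -1 then addL (mx e) else .node .leaf (mx e)

def mn : List ℤ → PBTree
  | [] => .node .leaf .leaf
  | x :: e => if x = -1 then addL (mn e) else addR (mn e)

theorem ne_leaf_of {t : PBTree} {e : List ℤ} (h : P t = e ++ [-1]) : t ≠ .leaf := by
  rintro rfl
  simp [P] at h

theorem P_mx (e : List ℤ) (hs : ∀ x ∈ e, x = -1 ∨ x = 1) : P (mx e) = e ++ [-1] := by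
  induction e with
  | nil => rfl
  | cons x e ih =>
    have ih := ih (fun y hy => hs y (by simp [hy]))
    rcases hs x (by simp) with rfl | rfl
    · simp [mx, P_addL, ih]
    · have := ne_leaf_of ih
      simp only [mx]
      rw [if_neg (by norm_num)]
      generalize mx e = t at *
      cases t with
      | leaf => exact absurd rfl this
      | node a b => simp [P, ih]

theorem P_mn (e : List ℤ) (hs : ∀ x ∈ e, x = -1 ∨ x = 1) : P (mn e) = e ++ [-1] := by
  induction e with
  | nil => rfl
  | cons x e ih =>
    have ih := ih (fun y hy => hs y (by simp [hy]))
    rcases hs x (by simp) with rfl | rfl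
    · simp [mn, P_addL, ih]
    · simp only [mn]
      rw [if_neg (by norm_num), P_addR _ (ne_leaf_of ih), ih]; rfl

theorem bounds (e : List ℤ) (hs : ∀ x ∈ e, x = -1 ∨ x = 1) (t : PBTree) (h : P t = e ++ [-1]) :
    TreeLe (mn e) t ∧ TreeLe t (mx e) := by
  induction e generalizing t with
  | nil =>
    have hl := P_length t
    rw [h] at hl
    match t, hl with
    | .node .leaf .leaf, _ => exact ⟨.refl _, .refl _⟩
    | .node .leaf (.node a b), hl => simp [PBTree.size] at hl
    | .node (.node a b) r, hl => simp [PBTree.size] at hl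
  | cons x e ih =>
    have hr : P (remL t) = e ++ [-1] := by rw [P_remL, h]; rfl
    obtain ⟨h1, h2⟩ := ih (fun y hy => hs y (by simp [hy])) _ hr
    rcases hs x (by simp) with rfl | rfl
    · have := addL_remL t (by rw [h]; rfl)
      simp only [mn, mx, if_true]
      rw [← this]
      exact ⟨addL_mono h1, addL_mono h2⟩
    · have := addR_remL t (by rw [h]; rfl)
      simp only [mn, mx]
      rw [if_neg (by norm_num), if_neg (by norm_num)]
      exact ⟨.trans (addR_mono h1) this.2,
        .trans (le_remL t (ne_leaf_of h)) (.graft (.refl _) h2)⟩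

end S17

/-- Proposition 3.5: for every `n ≥ 1` and every `ε ∈ Qₙ` (a list of
`n-1` signs `±1`) there exist trees `min(ε), max(ε) ∈ Yₙ` such that the fiber of
`φₙ : Yₙ → Qₙ` over `ε` is the weak order interval
`φₙ⁻¹(ε) = {t ∈ Yₙ : min(ε) ≤ t ≤ max(ε)}`. -/
theorem stmt17 (n : ℕ) (hn : 1 ≤ n) (ε : List ℤ) (hlen : ε.length = n - 1)
    (hsign : ∀ x ∈ ε, x = -1 ∨ x = 1) :
    ∃ mn mx : PBTree, mn.size = n ∧ mx.size = n ∧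
      ∀ t : PBTree, t.size = n → (phi t = ε ↔ (TreeLe mn t ∧ TreeLe t mx)) := by
  have hmx := S17.P_mx ε hsign
  have hmn := S17.P_mn ε hsign
  refine ⟨S17.mn ε, S17.mx ε, ?_, ?_, ?_⟩
  · rw [← S17.P_length, hmn]; simp; omega
  · rw [← S17.P_length, hmx]; simp; omega
  · intro t ht
    have hne : t ≠ .leaf := by
      rintro rfl
      simp [PBTree.size] at ht
      omega
    have hP := S17.P_phi t hne
    constructor
    · intro h
      exact S17.bounds ε hsign t (by rw [hP, h])
    · rintro ⟨h1, h2⟩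
      have h1 := (S17.mono h1).1
      have h2 := (S17.mono h2).1
      rw [hmn, hP] at h1
      rw [hmx, hP] at h2
      exact List.append_cancel_right (S17.le_antisymm_list h2 h1)
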